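/- Let 1/2 ≤ α < 1 and let ρ₀, ρ₁, σ₀, σ₁ be positive definite n×n matrices with tr(ρ₀) = tr(ρ₁) = t > 0. Then for s ∈ [0,1], D_α((1−s)ρ₀+sρ₁ ‖ (1−s)σ₀+sσ₁) ≤ (1−s) D_α(ρ₀‖σ₀) + s D_α(ρ₁‖σ₁), where D_α(ρ‖σ) = (α−1)^{−1} log( t^{−1} tr((σ^{(1−α)/(2α)} ρ σ^{(1−α)/(2α)})^α) ). -/

import Mathlib

open Matrix ComplexOrder

/-- Functional calculus for Hermitian matrices: apply `f` to the eigenvalues. -/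
noncomputable def mfun {m : Type*} [Fintype m] [DecidableEq m] (f : ℝ → ℝ)
    (A : Matrix m m ℂ) : Matrix m m ℂ :=
  if hA : A.IsHermitian then
    (hA.eigenvectorUnitary : Matrix m m ℂ) *
      Matrix.diagonal (fun i => (f (hA.eigenvalues i) : ℂ)) *
      (star (hA.eigenvectorUnitary : Matrix m m ℂ))
  else 0

/-- Real matrix power via the functional calculus. -/
noncomputable def mpow {m : Type*} [Fintype m] [DecidableEq m]
    (A : Matrix m m ℂ) (p : ℝ) : Matrix m m ℂ :=
  mfun (fun x => x ^ p) A

/-!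
Since `(α - 1)⁻¹ < 0` and `log` is increasing and concave, it suffices that
`Q_α(ρ‖σ) = tr((σ ^ ((1 - α) / (2 * α)) ρ σ ^ ((1 - α) / (2 * α))) ^ α)` is jointly concave.
Put `p = (1 - α) / α ≤ 1`. A trace form of Young's inequality gives the variational formula
`Q_α(ρ‖σ) = min_G (α tr(ρ (G Gᴴ)⁻¹) + (1 - α) tr((Gᴴ σ ^ p G) ^ (1 / p)))` over invertible `G`,
which decouples `ρ` and `σ`. The first summand is linear in `ρ`, and the second is concave in `σ` by
Epstein's theorem. A second variational formula, now a maximum, writes Epstein's function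
`A ↦ tr((Bᴴ A ^ p B) ^ (1 / p))` as a partial maximum of a jointly concave function built from
Lieb's `(A, C) ↦ tr(A ^ p B C ^ (1 - p) Bᴴ)`. Finally, Lieb's function is an integral of parallel
sums of quadratic forms, each an infimum of functions linear in `(A, C)`. Both variational formulas
come from Klein's inequality applied to the tangent lines of `x ↦ x ^ q`.
-/

section Convexity

variable {E F : Type*} [AddCommGroup E] [Module ℝ E] [AddCommGroup F] [Module ℝ F] {s : Set E}

theorem concaveOn_of_isLeast {ι : Type*} {f : ι → E → ℝ} {g : E → ℝ} (hs : Convex ℝ s)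
    (hf : ∀ i, ConcaveOn ℝ s (f i))
    (hg : ∀ x ∈ s, IsLeast (Set.range fun i => f i x) (g x)) : ConcaveOn ℝ s g := by
  refine ⟨hs, fun x hx y hy a b ha hb hab => ?_⟩
  obtain ⟨i, hi⟩ := (hg _ (hs hx hy ha hb hab)).1
  have hgx : g x ≤ f i x := (hg x hx).2 ⟨i, rfl⟩
  have hgy : g y ≤ f i y := (hg y hy).2 ⟨i, rfl⟩
  calc a • g x + b • g y ≤ a • f i x + b • f i y := by gcongr
    _ ≤ f i (a • x + b • y) := (hf i).2 hx hy ha hb hab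
    _ = g (a • x + b • y) := hi

theorem concaveOn_of_isGreatest {t : Set F} {G : E × F → ℝ} {g : E → ℝ} (hs : Convex ℝ s)
    (hG : ConcaveOn ℝ (s ×ˢ t) G)
    (hg : ∀ x ∈ s, IsGreatest ((fun y => G (x, y)) '' t) (g x)) : ConcaveOn ℝ s g := by
  refine ⟨hs, fun x hx x' hx' a b ha hb hab => ?_⟩
  obtain ⟨⟨y, hy, hxy⟩, -⟩ := hg x hx
  obtain ⟨⟨y', hy', hxy'⟩, -⟩ := hg x' hx'
  have hmem := hG.1 (Set.mk_mem_prod hx hy) (Set.mk_mem_prod hx' hy') ha hb hab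
  calc a • g x + b • g x' = a • G (x, y) + b • G (x', y') := by rw [← hxy, ← hxy']
    _ ≤ G (a • x + b • x', a • y + b • y') :=
      hG.2 (Set.mk_mem_prod hx hy) (Set.mk_mem_prod hx' hy') ha hb hab
    _ ≤ g (a • x + b • x') := (hg _ hmem.1).2 ⟨_, hmem.2, rfl⟩

theorem concaveOn_integral {Ω : Type*} [MeasurableSpace Ω] {μ : MeasureTheory.Measure Ω}
    {f : Ω → E → ℝ} (hs : Convex ℝ s) (hf : ∀ᵐ ω ∂μ, ConcaveOn ℝ s (f ω))
    (hint : ∀ x ∈ s, MeasureTheory.Integrable (fun ω => f ω x) μ) :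
    ConcaveOn ℝ s fun x => ∫ ω, f ω x ∂μ := by
  refine ⟨hs, fun x hx y hy a b ha hb hab => ?_⟩
  simp only [smul_eq_mul]
  rw [← MeasureTheory.integral_const_mul, ← MeasureTheory.integral_const_mul,
    ← MeasureTheory.integral_add ((hint x hx).const_mul a) ((hint y hy).const_mul b)]
  refine MeasureTheory.integral_mono_ae (((hint x hx).const_mul a).add ((hint y hy).const_mul b))
    (hint _ (hs hx hy ha hb hab)) ?_
  filter_upwards [hf] with ω hω using hω.2 hx hy ha hb hab

theorem concaveOn_log_comp {f : E → ℝ} (hf : ConcaveOn ℝ s f)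
    (hpos : ∀ x ∈ s, 0 < f x) : ConcaveOn ℝ s fun x => Real.log (f x) := by
  refine ⟨hf.1, fun x hx y hy a b ha hb hab => ?_⟩
  have hmem : a • f x + b • f y ∈ Set.Ioi 0 :=
    convex_Ioi 0 (hpos x hx) (hpos y hy) ha hb hab
  calc a • Real.log (f x) + b • Real.log (f y) ≤ Real.log (a • f x + b • f y) :=
      strictConcaveOn_log_Ioi.concaveOn.2 (hpos x hx) (hpos y hy) ha hb hab
    _ ≤ Real.log (f (a • x + b • y)) := Real.log_le_log hmem (hf.2 hx hy ha hb hab)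

end Convexity

section Trace

variable {𝕜 m : Type*} [RCLike 𝕜] [Fintype m]

/-- The real part of the trace, as a real-linear functional. -/
noncomputable def reTrace : Matrix m m 𝕜 →ₗ[ℝ] ℝ :=
  RCLike.reLm ∘ₗ Matrix.traceLinearMap m ℝ 𝕜

theorem reTrace_apply (A : Matrix m m 𝕜) : reTrace A = RCLike.re A.trace := rfl

theorem reTrace_mul_comm {k : Type*} [Fintype k] (A : Matrix m k 𝕜) (B : Matrix k m 𝕜) :
    reTrace (A * B) = reTrace (B * A) := by
  rw [reTrace_apply, reTrace_apply, trace_mul_comm]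

theorem reTrace_diagonal_mul_mul_diagonal_mul_conjTranspose {k : Type*} [Fintype k]
    [DecidableEq m] [DecidableEq k] (d : m → ℝ) (e : k → ℝ) (W : Matrix m k 𝕜) :
    reTrace (diagonal (fun i => (d i : 𝕜)) * W * diagonal (fun j => (e j : 𝕜)) * Wᴴ) =
      ∑ i, ∑ j, d i * e j * ‖W i j‖ ^ 2 := by
  have hentry (i : m) (j : k) : (d i : 𝕜) * W i j * (e j : 𝕜) * star (W i j) =
      ((d i * e j * ‖W i j‖ ^ 2 : ℝ) : 𝕜) := by
    push_cast
    rw [← RCLike.mul_conj, starRingEnd_apply]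
    ring
  simp only [reTrace_apply, trace, diag_apply, mul_apply (N := Wᴴ), mul_diagonal, diagonal_mul,
    conjTranspose_apply, hentry, map_sum, RCLike.ofReal_re]

end Trace

section PosDef

open scoped MatrixOrder

variable {𝕜 m : Type*} [RCLike 𝕜]

theorem convex_posDef : Convex ℝ {A : Matrix m m 𝕜 | A.PosDef} :=
  convex_iff_forall_pos.2 fun _ hA _ hB _ _ ha hb _ => (hA.smul ha).add (hB.smul hb)

variable [Fintype m] [DecidableEq m] {A : Matrix m m 𝕜}

theorem posDef_rpow (hA : A.PosDef) (p : ℝ) : (A ^ p).PosDef :=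
  isStrictlyPositive_iff_posDef.1 (hA.isStrictlyPositive.rpow A p)

theorem mul_rpow_sub_one (hA : A.PosDef) (p : ℝ) : A * A ^ (p - 1) = A ^ p := by
  rw [← add_sub_cancel 1 p, CFC.rpow_add hA.isUnit, CFC.rpow_one A, add_sub_cancel_left]

theorem rpow_neg_one_eq_nonsing_inv (hA : A.PosDef) : A ^ (-1 : ℝ) = A⁻¹ := by
  refine (inv_eq_left_inv ?_).symm
  conv_lhs => enter [2]; rw [← CFC.rpow_one A]
  exact CFC.rpow_neg_mul_rpow 1

theorem cfc_eq_mul_diagonal_mul (hA : A.IsHermitian) (f : ℝ → ℝ) :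
    cfc f A = (hA.eigenvectorUnitary : Matrix m m 𝕜) *
      diagonal (fun i => (f (hA.eigenvalues i) : 𝕜)) *
        (hA.eigenvectorUnitary : Matrix m m 𝕜)ᴴ := by
  rw [hA.cfc_eq, IsHermitian.cfc, Unitary.conjStarAlgAut_apply]
  rfl

theorem mpow_eq_rpow {A : Matrix m m ℂ} (hA : A.PosDef) (p : ℝ) : mpow A p = A ^ p := by
  rw [CFC.rpow_eq_cfc_real, cfc_eq_mul_diagonal_mul hA.isHermitian, mpow, mfun,
    dif_pos hA.isHermitian]
  rfl

theorem reTrace_cfc (hA : A.IsHermitian) (f : ℝ → ℝ) :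
    reTrace (cfc f A) = ∑ i, f (hA.eigenvalues i) := by
  have hU : (hA.eigenvectorUnitary : Matrix m m 𝕜)ᴴ * hA.eigenvectorUnitary = 1 :=
    Unitary.coe_star_mul_self hA.eigenvectorUnitary
  rw [cfc_eq_mul_diagonal_mul hA, reTrace_mul_comm, ← Matrix.mul_assoc, hU, Matrix.one_mul,
    reTrace_apply, trace_diagonal, map_sum]
  simp only [RCLike.ofReal_re]

theorem reTrace_cfc_mul_conjTranspose_self (f : ℝ → ℝ) (G : Matrix m m 𝕜) :
    reTrace (cfc f (G * Gᴴ)) = reTrace (cfc f (Gᴴ * G)) := by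
  have h₁ := isHermitian_mul_conjTranspose_self G
  have h₂ := isHermitian_conjTranspose_mul_self G
  rw [reTrace_cfc h₁, reTrace_cfc h₂,
    (h₁.eigenvalues_eq_eigenvalues_iff h₂).2 (charpoly_mul_comm G Gᴴ)]

end PosDef

section EigenCoord

variable {𝕜 m k : Type*} [RCLike 𝕜] [Fintype m] [DecidableEq m] [Fintype k] [DecidableEq k]
  {A : Matrix m m 𝕜} {C : Matrix k k 𝕜}

/-- The matrix of the operator `B` with respect to the eigenbases of `C` and `A`. In these
coordinates the traces of products of functions of `A` and `C` with `B` become weighted sums of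
squares. -/
noncomputable def eigenCoord (hA : A.IsHermitian) (hC : C.IsHermitian) (B : Matrix m k 𝕜) :
    Matrix m k 𝕜 :=
  (hA.eigenvectorUnitary : Matrix m m 𝕜)ᴴ * B * (hC.eigenvectorUnitary : Matrix k k 𝕜)

theorem eigenCoord_sub (hA : A.IsHermitian) (hC : C.IsHermitian) (B B' : Matrix m k 𝕜) :
    eigenCoord hA hC (B - B') = eigenCoord hA hC B - eigenCoord hA hC B' := by
  simp only [eigenCoord, Matrix.mul_sub, Matrix.sub_mul]

theorem eigenCoord_surjective (hA : A.IsHermitian) (hC : C.IsHermitian) :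
    Function.Surjective (eigenCoord hA hC) := by
  intro W
  have hU : (hA.eigenvectorUnitary : Matrix m m 𝕜)ᴴ * hA.eigenvectorUnitary = 1 :=
    Unitary.coe_star_mul_self hA.eigenvectorUnitary
  have hV : (hC.eigenvectorUnitary : Matrix k k 𝕜)ᴴ * hC.eigenvectorUnitary = 1 :=
    Unitary.coe_star_mul_self hC.eigenvectorUnitary
  refine ⟨(hA.eigenvectorUnitary : Matrix m m 𝕜) * W *
    (hC.eigenvectorUnitary : Matrix k k 𝕜)ᴴ, ?_⟩
  rw [eigenCoord, Matrix.mul_assoc, Matrix.mul_assoc _ _ (_ : Matrix k k 𝕜), hV, Matrix.mul_one,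
    ← Matrix.mul_assoc, hU, Matrix.one_mul]

theorem reTrace_cfc_mul_mul_cfc_mul_conjTranspose (hA : A.IsHermitian) (hC : C.IsHermitian)
    (f g : ℝ → ℝ) (B : Matrix m k 𝕜) :
    reTrace (cfc f A * B * cfc g C * Bᴴ) =
      ∑ i, ∑ j, f (hA.eigenvalues i) * g (hC.eigenvalues j) * ‖eigenCoord hA hC B i j‖ ^ 2 := by
  rw [← reTrace_diagonal_mul_mul_diagonal_mul_conjTranspose, cfc_eq_mul_diagonal_mul hA,
    cfc_eq_mul_diagonal_mul hC]
  simp only [eigenCoord, conjTranspose_mul, conjTranspose_conjTranspose, Matrix.mul_assoc]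
  rw [reTrace_mul_comm (hA.eigenvectorUnitary : Matrix m m 𝕜)]
  simp only [Matrix.mul_assoc]

end EigenCoord

section ParallelForm

theorem isLeast_weighted_sq_norm {V : Type*} [NormedAddCommGroup V] [NormedSpace ℝ V]
    {u v : ℝ} (hu : 0 < u) (hv : 0 < v) (b : V) :
    IsLeast (Set.range fun x => u * ‖x‖ ^ 2 + v * ‖b - x‖ ^ 2)
      (u * v / (u + v) * ‖b‖ ^ 2) := by
  have huv : 0 < u + v := add_pos hu hv
  refine ⟨⟨(v / (u + v)) • b, ?_⟩, ?_⟩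
  · have hsub : b - (v / (u + v)) • b = (u / (u + v)) • b := by
      rw [sub_eq_iff_eq_add, ← add_smul, ← add_div, div_self huv.ne', one_smul]
    simp only [hsub, norm_smul, mul_pow, Real.norm_eq_abs, sq_abs]
    field_simp
    ring
  · rintro _ ⟨x, rfl⟩
    have hb : ‖b‖ ≤ ‖x‖ + ‖b - x‖ := by simpa using norm_add_le x (b - x)
    calc u * v / (u + v) * ‖b‖ ^ 2 ≤ u * v / (u + v) * (‖x‖ + ‖b - x‖) ^ 2 := by gcongr
      _ ≤ u * ‖x‖ ^ 2 + v * ‖b - x‖ ^ 2 := by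
        rw [div_mul_eq_mul_div, div_le_iff₀ huv]
        linarith [sq_nonneg (u * ‖x‖ - v * ‖b - x‖)]

variable {𝕜 m k : Type*} [RCLike 𝕜] [Fintype m] [Fintype k]
  {A : Matrix m m 𝕜} {C : Matrix k k 𝕜}

/-- The parallel sum of the two quadratic forms `X ↦ u tr(A X Xᴴ)` and `X ↦ tr(X C Xᴴ)` on
rectangular matrices, evaluated at `B`. Integrating these over `u` yields
`tr(A ^ p B C ^ (1 - p) Bᴴ)`. If `A` or `C` is not positive semidefinite, the infimum may be over an
unbounded set and then has the junk value `0`. -/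
noncomputable def parallelForm (B : Matrix m k 𝕜) (u : ℝ) (A : Matrix m m 𝕜)
    (C : Matrix k k 𝕜) : ℝ :=
  ⨅ X : Matrix m k 𝕜, u * reTrace (A * (X * Xᴴ)) + reTrace (C * ((B - X)ᴴ * (B - X)))

section Spectral

variable [DecidableEq m] [DecidableEq k]

theorem weighted_reTrace_eq_sum (hA : A.IsHermitian) (hC : C.IsHermitian) (u : ℝ)
    (B X : Matrix m k 𝕜) :
    u * reTrace (A * (X * Xᴴ)) + reTrace (C * ((B - X)ᴴ * (B - X))) =
      ∑ i, ∑ j, (u * hA.eigenvalues i * ‖eigenCoord hA hC X i j‖ ^ 2 +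
        hC.eigenvalues j * ‖eigenCoord hA hC B i j - eigenCoord hA hC X i j‖ ^ 2) := by
  have hX := reTrace_cfc_mul_mul_cfc_mul_conjTranspose hA hC id 1 X
  have hBX := reTrace_cfc_mul_mul_cfc_mul_conjTranspose hA hC 1 id (B - X)
  rw [cfc_id ℝ A hA.isSelfAdjoint, cfc_one ℝ C hC.isSelfAdjoint, Matrix.mul_one,
    Matrix.mul_assoc] at hX
  rw [cfc_id ℝ C hC.isSelfAdjoint, cfc_one ℝ A hA.isSelfAdjoint, Matrix.one_mul,
    Matrix.mul_assoc, reTrace_mul_comm, Matrix.mul_assoc, eigenCoord_sub] at hBX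
  rw [hX, hBX]
  simp only [Finset.mul_sum, Finset.sum_add_distrib, id_eq, Pi.one_apply, mul_one, one_mul,
    Matrix.sub_apply, mul_assoc]

theorem isLeast_weighted_reTrace (hA : A.PosDef) (hC : C.PosDef) {u : ℝ} (hu : 0 < u)
    (B : Matrix m k 𝕜) :
    IsLeast (Set.range fun X : Matrix m k 𝕜 =>
        u * reTrace (A * (X * Xᴴ)) + reTrace (C * ((B - X)ᴴ * (B - X))))
      (∑ i, ∑ j, u * hA.1.eigenvalues i * hC.1.eigenvalues j /
        (u * hA.1.eigenvalues i + hC.1.eigenvalues j) * ‖eigenCoord hA.1 hC.1 B i j‖ ^ 2) := by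
  have hmin (i : m) (j : k) := isLeast_weighted_sq_norm (mul_pos hu (hA.eigenvalues_pos i))
    (hC.eigenvalues_pos j) (eigenCoord hA.1 hC.1 B i j)
  simp only [weighted_reTrace_eq_sum hA.1 hC.1]
  refine ⟨?_, ?_⟩
  · choose W hW using fun i j => (hmin i j).1
    obtain ⟨X, hX⟩ := eigenCoord_surjective hA.1 hC.1 (Matrix.of W)
    refine ⟨X, ?_⟩
    simp only [hX, of_apply, hW]
  · rintro _ ⟨X, rfl⟩
    exact Finset.sum_le_sum fun i _ => Finset.sum_le_sum fun j _ => (hmin i j).2 ⟨_, rfl⟩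

theorem parallelForm_eq_sum (hA : A.PosDef) (hC : C.PosDef) {u : ℝ} (hu : 0 < u)
    (B : Matrix m k 𝕜) :
    parallelForm B u A C = ∑ i, ∑ j, u * hA.1.eigenvalues i * hC.1.eigenvalues j /
      (u * hA.1.eigenvalues i + hC.1.eigenvalues j) * ‖eigenCoord hA.1 hC.1 B i j‖ ^ 2 :=
  (isLeast_weighted_reTrace hA hC hu B).csInf_eq

end Spectral

theorem concaveOn_parallelForm (B : Matrix m k 𝕜) {u : ℝ} (hu : 0 < u) :
    ConcaveOn ℝ ({A : Matrix m m 𝕜 | A.PosDef} ×ˢ {C : Matrix k k 𝕜 | C.PosDef})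
      fun x => parallelForm B u x.1 x.2 := by
  classical
  have hconv := (convex_posDef (𝕜 := 𝕜) (m := m)).prod (convex_posDef (𝕜 := 𝕜) (m := k))
  refine concaveOn_of_isLeast hconv (f := fun (X : Matrix m k 𝕜) x =>
    u * reTrace (x.1 * (X * Xᴴ)) + reTrace (x.2 * ((B - X)ᴴ * (B - X)))) (fun X => ?_) ?_
  · exact (u • (reTrace ∘ₗ LinearMap.mulRight ℝ (X * Xᴴ) ∘ₗ LinearMap.fst ℝ _ _) +
      reTrace ∘ₗ LinearMap.mulRight ℝ ((B - X)ᴴ * (B - X)) ∘ₗ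
        LinearMap.snd ℝ _ _).concaveOn hconv
  · rintro ⟨A, C⟩ ⟨hA, hC⟩
    rw [parallelForm_eq_sum hA hC hu]
    exact isLeast_weighted_reTrace hA hC hu B

end ParallelForm

section Lieb

open MeasureTheory Set
open scoped MatrixOrder

theorem exists_measure_rpow_mul_rpow_eq_integral {p : ℝ} (hp : p ∈ Ioo 0 1) :
    ∃ μ : Measure ℝ, ∀ a > 0, ∀ c > 0,
      IntegrableOn (fun t => t ^ (p - 1) * (t⁻¹ * a * c / (t⁻¹ * a + c))) (Ioi 0) μ ∧
        a ^ p * c ^ (1 - p) =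
          ∫ t in Ioi 0, t ^ (p - 1) * (t⁻¹ * a * c / (t⁻¹ * a + c)) ∂μ := by
  obtain ⟨μ, hμ⟩ := Real.exists_measure_rpow_eq_integral_rpowIntegrand₀₁ hp
  refine ⟨μ, fun a (ha : 0 < a) c (hc : 0 < c) => ?_⟩
  -- Dividing by `c` reduces the claim to the integral representation of `(a / c) ^ p`.
  have hkernel : EqOn (fun t => c * Real.rpowIntegrand₀₁ p t (a / c))
      (fun t => t ^ (p - 1) * (t⁻¹ * a * c / (t⁻¹ * a + c))) (Ioi 0) := by
    intro t (ht : 0 < t)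
    simp only [Real.rpowIntegrand₀₁_eq_pow_div hp ht.le (div_pos ha hc).le]
    field_simp
    rw [add_comm]
  obtain ⟨hint, heq⟩ := hμ (a / c) (div_pos ha hc).le
  refine ⟨IntegrableOn.congr_fun (hint.const_mul c) hkernel measurableSet_Ioi, ?_⟩
  rw [← setIntegral_congr_fun measurableSet_Ioi hkernel, integral_const_mul, ← heq,
    Real.div_rpow ha.le hc.le, Real.rpow_sub hc, Real.rpow_one]
  ring

variable {𝕜 m k : Type*} [RCLike 𝕜] [Fintype m] [Fintype k] [DecidableEq m] [DecidableEq k]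

theorem reTrace_rpow_mul_mul_rpow_mul_conjTranspose {A : Matrix m m 𝕜} {C : Matrix k k 𝕜}
    (hA : A.PosDef) (hC : C.PosDef) (p q : ℝ) (B : Matrix m k 𝕜) :
    reTrace (A ^ p * B * C ^ q * Bᴴ) = ∑ i, ∑ j,
      hA.1.eigenvalues i ^ p * hC.1.eigenvalues j ^ q * ‖eigenCoord hA.1 hC.1 B i j‖ ^ 2 := by
  rw [CFC.rpow_eq_cfc_real, CFC.rpow_eq_cfc_real,
    reTrace_cfc_mul_mul_cfc_mul_conjTranspose hA.1 hC.1]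

theorem exists_measure_reTrace_rpow_mul_mul_rpow_eq_integral {p : ℝ} (hp : p ∈ Ioo 0 1)
    (B : Matrix m k 𝕜) :
    ∃ μ : Measure ℝ, ∀ (A : Matrix m m 𝕜) (C : Matrix k k 𝕜), A.PosDef → C.PosDef →
      IntegrableOn (fun t => t ^ (p - 1) * parallelForm B t⁻¹ A C) (Ioi 0) μ ∧
        reTrace (A ^ p * B * C ^ (1 - p) * Bᴴ) =
          ∫ t in Ioi 0, t ^ (p - 1) * parallelForm B t⁻¹ A C ∂μ := by
  obtain ⟨μ, hμ⟩ := exists_measure_rpow_mul_rpow_eq_integral hp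
  refine ⟨μ, fun A C hA hC => ?_⟩
  set F : m → k → ℝ → ℝ := fun i j t => t ^ (p - 1) *
    (t⁻¹ * hA.1.eigenvalues i * hC.1.eigenvalues j /
      (t⁻¹ * hA.1.eigenvalues i + hC.1.eigenvalues j)) * ‖eigenCoord hA.1 hC.1 B i j‖ ^ 2 with hF
  have hFint (i : m) (j : k) : IntegrableOn (F i j) (Ioi 0) μ :=
    (hμ _ (hA.eigenvalues_pos i) _ (hC.eigenvalues_pos j)).1.mul_const _
  have hsum : EqOn (fun t => ∑ i, ∑ j, F i j t) (fun t => t ^ (p - 1) * parallelForm B t⁻¹ A C)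
      (Ioi 0) := by
    intro t (ht : 0 < t)
    simp only [hF, parallelForm_eq_sum hA hC (inv_pos.2 ht), Finset.mul_sum, mul_assoc]
  refine ⟨IntegrableOn.congr_fun (integrable_finsetSum _ fun i _ =>
    integrable_finsetSum _ fun j _ => hFint i j) hsum measurableSet_Ioi, ?_⟩
  rw [← setIntegral_congr_fun measurableSet_Ioi hsum,
    integral_finsetSum _ fun i _ => integrable_finsetSum _ fun j _ => hFint i j,
    reTrace_rpow_mul_mul_rpow_mul_conjTranspose hA hC]
  refine Finset.sum_congr rfl fun i _ => ?_
  rw [integral_finsetSum _ fun j _ => hFint i j]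
  refine Finset.sum_congr rfl fun j _ => ?_
  rw [(hμ _ (hA.eigenvalues_pos i) _ (hC.eigenvalues_pos j)).2, integral_mul_const]

theorem concaveOn_reTrace_rpow_mul_mul_rpow {p : ℝ} (hp : p ∈ Icc 0 1) (B : Matrix m k 𝕜) :
    ConcaveOn ℝ ({A : Matrix m m 𝕜 | A.PosDef} ×ˢ {C : Matrix k k 𝕜 | C.PosDef})
      fun x => reTrace (x.1 ^ p * B * x.2 ^ (1 - p) * Bᴴ) := by
  have hconv := (convex_posDef (𝕜 := 𝕜) (m := m)).prod (convex_posDef (𝕜 := 𝕜) (m := k))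
  rcases hp.1.eq_or_lt with rfl | hp0
  · refine ((reTrace ∘ₗ LinearMap.mulRight ℝ (Bᴴ * B) ∘ₗ
      LinearMap.snd ℝ _ _).concaveOn hconv).congr fun x ⟨h₁, h₂⟩ => ?_
    rw [CFC.rpow_zero x.1 h₁.posSemidef.nonneg, sub_zero, CFC.rpow_one x.2 h₂.posSemidef.nonneg,
      Matrix.one_mul, Matrix.mul_assoc, reTrace_mul_comm, Matrix.mul_assoc]
    rfl
  rcases hp.2.eq_or_lt with rfl | hp1
  · refine ((reTrace ∘ₗ LinearMap.mulRight ℝ (B * Bᴴ) ∘ₗ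
      LinearMap.fst ℝ _ _).concaveOn hconv).congr fun x ⟨h₁, h₂⟩ => ?_
    rw [sub_self, CFC.rpow_zero x.2 h₂.posSemidef.nonneg, CFC.rpow_one x.1 h₁.posSemidef.nonneg,
      Matrix.mul_one, Matrix.mul_assoc]
    rfl
  obtain ⟨μ, hμ⟩ := exists_measure_reTrace_rpow_mul_mul_rpow_eq_integral ⟨hp0, hp1⟩ B
  refine ConcaveOn.congr (concaveOn_integral hconv ?_ fun x hx => (hμ x.1 x.2 hx.1 hx.2).1)
    fun x hx => (hμ x.1 x.2 hx.1 hx.2).2.symm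
  filter_upwards [ae_restrict_mem measurableSet_Ioi] with t (ht : 0 < t)
  exact (concaveOn_parallelForm B (inv_pos.2 ht)).smul (Real.rpow_nonneg ht.le _)

end Lieb

section Klein

open scoped MatrixOrder

variable {𝕜 m : Type*} [RCLike 𝕜] [Fintype m] [DecidableEq m] {X Y : Matrix m m 𝕜}

theorem reTrace_cfc_add_reTrace_sub_mul_cfc_le (hX : X.IsHermitian) (hY : Y.IsHermitian)
    {f g : ℝ → ℝ}
    (hfg : ∀ x ∈ spectrum ℝ X, ∀ y ∈ spectrum ℝ Y, f y + (x - y) * g y ≤ f x) :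
    reTrace (cfc f Y) + reTrace ((X - Y) * cfc g Y) ≤ reTrace (cfc f X) := by
  -- All four traces are sums against the same nonnegative weights, the squared moduli of the inner
  -- products of eigenvectors, so that `hfg` can be applied termwise.
  have hsum (φ ψ : ℝ → ℝ) : reTrace (cfc φ X * cfc ψ Y) = ∑ i, ∑ j,
      φ (hX.eigenvalues i) * ψ (hY.eigenvalues j) * ‖eigenCoord hX hY 1 i j‖ ^ 2 := by
    simpa using reTrace_cfc_mul_mul_cfc_mul_conjTranspose hX hY φ ψ 1
  have hfY := hsum 1 f
  have hgX := hsum id g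
  have hgY := hsum 1 fun y => id y * g y
  have hfX := hsum f 1
  rw [cfc_one ℝ X hX.isSelfAdjoint, Matrix.one_mul] at hfY hgY
  rw [cfc_id ℝ X hX.isSelfAdjoint] at hgX
  rw [cfc_one ℝ Y hY.isSelfAdjoint, Matrix.mul_one] at hfX
  have hmul : cfc (fun y => id y * g y) Y = Y * cfc g Y := by
    rw [cfc_mul id g Y continuousOn_id (finite_real_spectrum.continuousOn g),
      cfc_id ℝ Y hY.isSelfAdjoint]
  rw [hmul] at hgY
  rw [Matrix.sub_mul, map_sub, hfY, hgX, hgY, hfX, ← Finset.sum_sub_distrib,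
    ← Finset.sum_add_distrib]
  refine Finset.sum_le_sum fun i _ => ?_
  rw [← Finset.sum_sub_distrib, ← Finset.sum_add_distrib]
  refine Finset.sum_le_sum fun j _ => ?_
  have hij := mul_le_mul_of_nonneg_right (hfg _ (hX.eigenvalues_mem_spectrum_real i) _
    (hY.eigenvalues_mem_spectrum_real j)) (sq_nonneg ‖eigenCoord hX hY 1 i j‖)
  simp only [Pi.one_apply, id_eq]
  linarith

theorem rpow_add_sub_mul_le_rpow {x y q : ℝ} (hx : 0 < x) (hy : 0 < y) (hq : 1 ≤ q) :
    y ^ q + (x - y) * (q * y ^ (q - 1)) ≤ x ^ q := by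
  have hbern := one_add_mul_self_le_rpow_one_add (s := x / y - 1) (by linarith [div_pos hx hy]) hq
  rw [add_sub_cancel, Real.div_rpow hx.le hy.le, le_div_iff₀ (Real.rpow_pos_of_pos hy q)] at hbern
  calc y ^ q + (x - y) * (q * y ^ (q - 1)) = (1 + q * (x / y - 1)) * y ^ q := by
        rw [Real.rpow_sub_one hy.ne']
        field_simp
    _ ≤ x ^ q := hbern

theorem rpow_le_rpow_add_sub_mul {x y q : ℝ} (hx : 0 < x) (hy : 0 < y) (hq : q ∈ Set.Icc 0 1) :
    x ^ q ≤ y ^ q + (x - y) * (q * y ^ (q - 1)) := by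
  have hbern := rpow_one_add_le_one_add_mul_self (s := x / y - 1)
    (by linarith [div_pos hx hy]) hq.1 hq.2
  rw [add_sub_cancel, Real.div_rpow hx.le hy.le, div_le_iff₀ (Real.rpow_pos_of_pos hy q)] at hbern
  calc x ^ q ≤ (1 + q * (x / y - 1)) * y ^ q := hbern
    _ = y ^ q + (x - y) * (q * y ^ (q - 1)) := by
        rw [Real.rpow_sub_one hy.ne']
        field_simp

theorem reTrace_sub_mul_rpow_sub_one (hY : Y.PosDef) (q : ℝ) :
    reTrace ((X - Y) * Y ^ (q - 1)) = reTrace (X * Y ^ (q - 1)) - reTrace (Y ^ q) := by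
  rw [Matrix.sub_mul, map_sub, mul_rpow_sub_one hY]

theorem mul_reTrace_mul_rpow_add_le (hX : X.PosDef) (hY : Y.PosDef) {q : ℝ} (hq : 1 ≤ q) :
    q * reTrace (X * Y ^ (q - 1)) + (1 - q) * reTrace (Y ^ q) ≤ reTrace (X ^ q) := by
  have hklein := reTrace_cfc_add_reTrace_sub_mul_cfc_le hX.1 hY.1 (f := fun x => x ^ q)
    (g := fun y => q * y ^ (q - 1)) fun x hx y hy =>
      rpow_add_sub_mul_le_rpow (hX.isStrictlyPositive.spectrum_pos hx)
        (hY.isStrictlyPositive.spectrum_pos hy) hq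
  rw [cfc_const_mul q _ Y (finite_real_spectrum.continuousOn _), ← CFC.rpow_eq_cfc_real,
    ← CFC.rpow_eq_cfc_real, ← CFC.rpow_eq_cfc_real, Matrix.mul_smul, map_smul,
    reTrace_sub_mul_rpow_sub_one hY, smul_eq_mul] at hklein
  linarith

theorem reTrace_rpow_le (hX : X.PosDef) (hY : Y.PosDef) {q : ℝ} (hq : q ∈ Set.Icc 0 1) :
    reTrace (X ^ q) ≤ q * reTrace (X * Y ^ (q - 1)) + (1 - q) * reTrace (Y ^ q) := by
  have hklein := reTrace_cfc_add_reTrace_sub_mul_cfc_le hX.1 hY.1 (f := fun x => -x ^ q)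
    (g := fun y => -(q * y ^ (q - 1))) fun x hx y hy => by
      linarith [rpow_le_rpow_add_sub_mul (hX.isStrictlyPositive.spectrum_pos hx)
        (hY.isStrictlyPositive.spectrum_pos hy) hq]
  rw [cfc_neg, cfc_neg, cfc_neg, cfc_const_mul q _ Y (finite_real_spectrum.continuousOn _),
    ← CFC.rpow_eq_cfc_real, ← CFC.rpow_eq_cfc_real, ← CFC.rpow_eq_cfc_real, Matrix.mul_neg,
    Matrix.mul_smul, map_neg, map_neg, map_neg, map_smul, reTrace_sub_mul_rpow_sub_one hY,
    smul_eq_mul] at hklein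
  linarith

end Klein

section Epstein

open Set
open scoped MatrixOrder

variable {𝕜 m k : Type*} [RCLike 𝕜] [Fintype m] [DecidableEq m] [Fintype k] [DecidableEq k]

theorem isGreatest_reTrace_rpow_inv {X : Matrix k k 𝕜} (hX : X.PosDef) {p : ℝ}
    (hp : p ∈ Ioc 0 1) :
    IsGreatest ((fun Z => p⁻¹ * (reTrace (X * Z ^ (1 - p)) - (1 - p) * reTrace Z)) ''
      {Z : Matrix k k 𝕜 | Z.PosDef}) (reTrace (X ^ p⁻¹)) := by
  have hp0 : p ≠ 0 := hp.1.ne'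
  refine ⟨⟨X ^ p⁻¹, posDef_rpow hX _, ?_⟩, ?_⟩
  · have hmul : X * (X ^ p⁻¹) ^ (1 - p) = X ^ p⁻¹ := by
      rw [CFC.rpow_rpow X _ _ (inv_ne_zero hp0), mul_sub, mul_one,
        inv_mul_cancel₀ hp0, mul_rpow_sub_one hX]
    simp only [hmul]
    field_simp
    ring
  · rintro _ ⟨Z, hZ : Z.PosDef, rfl⟩
    have hyoung := mul_reTrace_mul_rpow_add_le hX (posDef_rpow hZ p)
      ((one_le_inv₀ hp.1).2 hp.2)
    rw [CFC.rpow_rpow Z _ _ hp0, CFC.rpow_rpow Z _ _ hp0, mul_inv_cancel₀ hp0, mul_sub,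
      mul_inv_cancel₀ hp0, mul_one, CFC.rpow_one Z] at hyoung
    calc p⁻¹ * (reTrace (X * Z ^ (1 - p)) - (1 - p) * reTrace Z) =
        p⁻¹ * reTrace (X * Z ^ (1 - p)) + (1 - p⁻¹) * reTrace Z := by
          field_simp
          ring
      _ ≤ reTrace (X ^ p⁻¹) := hyoung

theorem concaveOn_reTrace_rpow_conjTranspose_mul_rpow_mul {p : ℝ} (hp : p ∈ Ioc 0 1)
    {B : Matrix m k 𝕜} (hB : Function.Injective B.mulVec) :
    ConcaveOn ℝ {A : Matrix m m 𝕜 | A.PosDef}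
      fun A => reTrace ((Bᴴ * A ^ p * B) ^ p⁻¹) := by
  have hlieb := concaveOn_reTrace_rpow_mul_mul_rpow (Ioc_subset_Icc_self hp) B
  have hlin := (((1 - p) • reTrace) ∘ₗ LinearMap.snd ℝ (Matrix m m 𝕜) (Matrix k k 𝕜)).convexOn
    hlieb.1
  refine concaveOn_of_isGreatest convex_posDef
    ((hlieb.sub hlin).smul (inv_nonneg.2 hp.1.le)) fun A (hA : A.PosDef) => ?_
  convert isGreatest_reTrace_rpow_inv ((posDef_rpow hA p).conjTranspose_mul_mul_same hB) hp
    using 3 with Z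
  have hcyclic : reTrace (A ^ p * B * Z ^ (1 - p) * Bᴴ) =
      reTrace (Bᴴ * A ^ p * B * Z ^ (1 - p)) := by
    rw [reTrace_mul_comm, ← Matrix.mul_assoc, ← Matrix.mul_assoc]
  rw [← hcyclic]
  rfl

end Epstein

section Sandwiched

open Set
open scoped MatrixOrder

variable {𝕜 m : Type*} [RCLike 𝕜] [Fintype m] [DecidableEq m]

theorem isLeast_reTrace_rpow {X : Matrix m m 𝕜} (hX : X.PosDef) {α : ℝ} (hα : α ∈ Ioo 0 1) :
    IsLeast (range fun G : (Matrix m m 𝕜)ˣ =>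
      α * reTrace (X * (G.1 * G.1ᴴ)⁻¹) + (1 - α) * reTrace ((G.1ᴴ * G.1) ^ (α / (1 - α))))
      (reTrace (X ^ α)) := by
  have hα1 : 1 - α ≠ 0 := (sub_pos.2 hα.2).ne'
  refine ⟨⟨(posDef_rpow hX ((1 - α) / 2)).isUnit.unit, ?_⟩, ?_⟩
  · have hsq : X ^ ((1 - α) / 2) * X ^ ((1 - α) / 2) = X ^ (1 - α) := by
      rw [← CFC.rpow_add hX.isUnit, add_halves]
    have hinv : X * (X ^ (1 - α))⁻¹ = X ^ α := by
      rw [← rpow_neg_one_eq_nonsing_inv (posDef_rpow hX _), CFC.rpow_rpow X _ _ hα1, mul_neg_one,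
        neg_sub, mul_rpow_sub_one hX]
    simp only [IsUnit.unit_spec, (posDef_rpow hX _).1.eq, hsq, hinv,
      CFC.rpow_rpow X _ _ hα1, mul_div_cancel₀ _ hα1]
    ring
  · rintro _ ⟨G, rfl⟩
    have hGG : (G.1 * G.1ᴴ).PosDef :=
      PosDef.mul_conjTranspose_self _ (vecMul_injective_of_isUnit G.isUnit)
    have hyoung := reTrace_rpow_le hX (posDef_rpow hGG (1 - α)⁻¹) (Ioo_subset_Icc_self hα)
    have hswap : reTrace ((G.1 * G.1ᴴ) ^ (α / (1 - α))) =
        reTrace ((G.1ᴴ * G.1) ^ (α / (1 - α))) := by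
      rw [CFC.rpow_eq_cfc_real (posSemidef_self_mul_conjTranspose _).nonneg,
        CFC.rpow_eq_cfc_real (posSemidef_conjTranspose_mul_self _).nonneg,
        reTrace_cfc_mul_conjTranspose_self]
    rw [CFC.rpow_rpow _ _ _ (inv_ne_zero hα1), CFC.rpow_rpow _ _ _ (inv_ne_zero hα1)]
      at hyoung
    have hexp : (1 - α)⁻¹ * (α - 1) = -1 := by
      rw [← neg_sub 1 α, mul_neg, inv_mul_cancel₀ hα1]
    rwa [hexp, rpow_neg_one_eq_nonsing_inv hGG, inv_mul_eq_div, hswap] at hyoung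

/-- The trace functional `Q_α(ρ‖σ)` whose logarithm is the sandwiched Rényi divergence up to scaling
and normalization. -/
noncomputable def sandwichedTrace (α : ℝ) (ρ σ : Matrix m m 𝕜) : ℝ :=
  reTrace ((σ ^ ((1 - α) / (2 * α)) * ρ * σ ^ ((1 - α) / (2 * α))) ^ α)

theorem posDef_rpow_mul_mul_rpow {ρ σ : Matrix m m 𝕜} (hρ : ρ.PosDef) (hσ : σ.PosDef) (p : ℝ) :
    (σ ^ p * ρ * σ ^ p).PosDef := by
  have hS := posDef_rpow hσ p
  simpa only [hS.1.eq] using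
    hρ.conjTranspose_mul_mul_same (mulVec_injective_of_isUnit hS.isUnit)

theorem sandwichedTrace_pos [Nonempty m] (α : ℝ) {ρ σ : Matrix m m 𝕜} (hρ : ρ.PosDef)
    (hσ : σ.PosDef) : 0 < sandwichedTrace α ρ σ :=
  (RCLike.pos_iff.1 (posDef_rpow (posDef_rpow_mul_mul_rpow hρ hσ _) α).trace_pos).1

theorem reTrace_mul_mul_mul_inv_mul_conjTranspose_self {S : Matrix m m 𝕜} (hS : S.PosDef)
    (ρ G : Matrix m m 𝕜) :
    reTrace (S * ρ * S * (S * G * (S * G)ᴴ)⁻¹) = reTrace (ρ * (G * Gᴴ)⁻¹) := by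
  have hdet : IsUnit S.det := (isUnit_iff_isUnit_det S).1 hS.isUnit
  have hinv : (S * G * (S * G)ᴴ)⁻¹ = S⁻¹ * (G * Gᴴ)⁻¹ * S⁻¹ := by
    rw [conjTranspose_mul, hS.1.eq, ← Matrix.mul_assoc, Matrix.mul_assoc S, Matrix.mul_inv_rev,
      Matrix.mul_inv_rev, ← Matrix.mul_assoc]
  calc reTrace (S * ρ * S * (S * G * (S * G)ᴴ)⁻¹) = reTrace (S * (ρ * (G * Gᴴ)⁻¹ * S⁻¹)) := by
        rw [hinv]
        simp only [Matrix.mul_assoc, mul_nonsing_inv_cancel_left S _ hdet]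
    _ = reTrace (ρ * (G * Gᴴ)⁻¹) := by
        rw [reTrace_mul_comm, nonsing_inv_mul_cancel_right S _ hdet]

theorem isLeast_sandwichedTrace {ρ σ : Matrix m m 𝕜} (hρ : ρ.PosDef) (hσ : σ.PosDef) {α : ℝ}
    (hα : α ∈ Ioo 0 1) :
    IsLeast (range fun G : (Matrix m m 𝕜)ˣ => α * reTrace (ρ * (G.1 * G.1ᴴ)⁻¹) +
      (1 - α) * reTrace ((G.1ᴴ * σ ^ ((1 - α) / α) * G.1) ^ ((1 - α) / α)⁻¹))
      (sandwichedTrace α ρ σ) := by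
  set S := σ ^ ((1 - α) / (2 * α)) with hS
  have hSpos : S.PosDef := posDef_rpow hσ _
  have hSS : S * S = σ ^ ((1 - α) / α) := by
    rw [hS, ← CFC.rpow_add hσ.isUnit]
    congr 1
    field_simp
    ring
  have hleast := isLeast_reTrace_rpow (posDef_rpow_mul_mul_rpow hρ hσ ((1 - α) / (2 * α))) hα
  -- Replacing `G` by `S * G` leaves `ρ` alone in one summand and `σ` alone in the other.
  have hrange := (Equiv.mulLeft hSpos.isUnit.unit).surjective.range_comp
    fun G : (Matrix m m 𝕜)ˣ => α * reTrace (S * ρ * S * (G.1 * G.1ᴴ)⁻¹) +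
      (1 - α) * reTrace ((G.1ᴴ * G.1) ^ (α / (1 - α)))
  rw [← hrange] at hleast
  convert hleast using 3 with G
  · have hGG : (S * G.1)ᴴ * (S * G.1) = G.1ᴴ * σ ^ ((1 - α) / α) * G.1 := by
      rw [conjTranspose_mul, hSpos.1.eq, ← hSS]
      simp only [Matrix.mul_assoc]
    simp only [Function.comp_apply, Equiv.coe_mulLeft, Units.val_mul, IsUnit.unit_spec, hGG,
      reTrace_mul_mul_mul_inv_mul_conjTranspose_self hSpos, inv_div]
  · rfl

theorem concaveOn_sandwichedTrace {α : ℝ} (hα : α ∈ Ico (1 / 2) 1) :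
    ConcaveOn ℝ ({ρ : Matrix m m 𝕜 | ρ.PosDef} ×ˢ {σ : Matrix m m 𝕜 | σ.PosDef})
      fun x => sandwichedTrace α x.1 x.2 := by
  have hα0 : 0 < α := by linarith [hα.1]
  have hα1 : 0 < 1 - α := sub_pos.2 hα.2
  have hp : (1 - α) / α ∈ Ioc 0 1 :=
    ⟨div_pos hα1 hα0, (div_le_one hα0).2 (by linarith [hα.1])⟩
  have hconv := (convex_posDef (𝕜 := 𝕜) (m := m)).prod (convex_posDef (𝕜 := 𝕜) (m := m))
  refine concaveOn_of_isLeast hconv (fun G => ?_)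
    fun x hx => isLeast_sandwichedTrace hx.1 hx.2 ⟨hα0, hα.2⟩
  have hlin := (α • reTrace ∘ₗ LinearMap.mulRight ℝ (G.1 * G.1ᴴ)⁻¹ ∘ₗ
    LinearMap.fst ℝ (Matrix m m 𝕜) (Matrix m m 𝕜)).concaveOn hconv
  have hepstein := (concaveOn_reTrace_rpow_conjTranspose_mul_rpow_mul hp
    (mulVec_injective_of_isUnit G.isUnit)).comp_linearMap
      (LinearMap.snd ℝ (Matrix m m 𝕜) (Matrix m m 𝕜))
  exact hlin.add ((hepstein.subset (fun x hx => hx.2) hconv).smul hα1.le)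

/-- The sandwiched Rényi divergence of order `α` of `ρ` with respect to `σ`. The normalization `t`
is a free parameter; the standard choice is the trace of `ρ`. -/
noncomputable def sandwichedRenyiDiv (α t : ℝ) (ρ σ : Matrix m m 𝕜) : ℝ :=
  (α - 1)⁻¹ * Real.log (t⁻¹ * sandwichedTrace α ρ σ)

theorem D_jointly_convex_general [Nonempty m] {α t : ℝ} (hα : α ∈ Ico (1 / 2) 1) (ht : 0 < t) :
    ConvexOn ℝ ({ρ : Matrix m m 𝕜 | ρ.PosDef} ×ˢ {σ : Matrix m m 𝕜 | σ.PosDef})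
      fun x => sandwichedRenyiDiv α t x.1 x.2 := by
  have hlog := concaveOn_log_comp
    ((concaveOn_sandwichedTrace (𝕜 := 𝕜) (m := m) hα).smul (inv_nonneg.2 ht.le))
    fun x hx => mul_pos (inv_pos.2 ht) (sandwichedTrace_pos α hx.1 hx.2)
  have hcoef : 0 ≤ -(α - 1)⁻¹ := neg_nonneg.2 (inv_nonpos.2 (sub_nonpos.2 hα.2.le))
  refine (hlog.smul hcoef).neg.congr fun x _ => ?_
  simp [sandwichedRenyiDiv]

theorem sandwichedRenyiDiv_eq_mpow {ρ σ : Matrix m m ℂ} (hρ : ρ.PosDef) (hσ : σ.PosDef)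
    (α t : ℝ) :
    sandwichedRenyiDiv α t ρ σ = (α - 1)⁻¹ * Real.log (t⁻¹ *
      (mpow (mpow σ ((1 - α) / (2 * α)) * ρ * mpow σ ((1 - α) / (2 * α))) α).trace.re) := by
  rw [mpow_eq_rpow hσ, mpow_eq_rpow (posDef_rpow_mul_mul_rpow hρ hσ _)]
  rfl

end Sandwiched

theorem D_jointly_convex {n : ℕ} (α : ℝ) (hα0 : 1/2 ≤ α) (hα1 : α < 1)
    (ρ₀ ρ₁ σ₀ σ₁ : Matrix (Fin n) (Fin n) ℂ)
    (hρ₀ : ρ₀.PosDef) (hρ₁ : ρ₁.PosDef) (hσ₀ : σ₀.PosDef) (hσ₁ : σ₁.PosDef)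
    (t : ℝ) (ht : 0 < t) (htr₀ : ρ₀.trace = (t : ℂ)) (htr₁ : ρ₁.trace = (t : ℂ))
    (s : ℝ) (hs0 : 0 ≤ s) (hs1 : s ≤ 1) :
    (fun (ρ σ : Matrix (Fin n) (Fin n) ℂ) => (α - 1)⁻¹ *
      Real.log (t⁻¹ *
        (mpow (mpow σ ((1 - α) / (2 * α)) * ρ * mpow σ ((1 - α) / (2 * α))) α).trace.re))
        (((1 - s : ℝ) : ℂ) • ρ₀ + ((s : ℝ) : ℂ) • ρ₁)
        (((1 - s : ℝ) : ℂ) • σ₀ + ((s : ℝ) : ℂ) • σ₁) ≤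
      (1 - s) * (fun (ρ σ : Matrix (Fin n) (Fin n) ℂ) => (α - 1)⁻¹ *
      Real.log (t⁻¹ *
        (mpow (mpow σ ((1 - α) / (2 * α)) * ρ * mpow σ ((1 - α) / (2 * α))) α).trace.re)) ρ₀ σ₀ + s * (fun (ρ σ : Matrix (Fin n) (Fin n) ℂ) => (α - 1)⁻¹ *
      Real.log (t⁻¹ *
        (mpow (mpow σ ((1 - α) / (2 * α)) * ρ * mpow σ ((1 - α) / (2 * α))) α).trace.re)) ρ₁ σ₁ := by
  have : Nonempty (Fin n) := by
    by_contra hempty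
    rw [not_nonempty_iff] at hempty
    rw [trace_eq_zero_of_isEmpty, eq_comm, Complex.ofReal_eq_zero] at htr₀
    exact ht.ne' htr₀
  have hs : 0 ≤ 1 - s := sub_nonneg.2 hs1
  have hρ := convex_posDef hρ₀ hρ₁ hs hs0 (sub_add_cancel 1 s)
  have hσ := convex_posDef hσ₀ hσ₁ hs hs0 (sub_add_cancel 1 s)
  simp only [Complex.coe_smul, ← sandwichedRenyiDiv_eq_mpow hρ₀ hσ₀,
    ← sandwichedRenyiDiv_eq_mpow hρ₁ hσ₁, ← sandwichedRenyiDiv_eq_mpow hρ hσ]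
  exact (D_jointly_convex_general ⟨hα0, hα1⟩ ht).2 (Set.mk_mem_prod hρ₀ hσ₀)
    (Set.mk_mem_prod hρ₁ hσ₁) hs hs0 (sub_add_cancel 1 s)
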